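/- Let s, N_h, N_H be positive integers, let A be an s×s complex matrix with eigenvalue decomposition A = X Λ X⁻¹, where X is invertible and Λ = diag(λ_1, …, λ_s), and let Δt ∈ ℂ. Let M_h, K_h be N_h×N_h complex matrices and M_H, K_H be N_H×N_H complex matrices, and set B_h = I_s ⊗ M_h + Δt (A ⊗ K_h) and B_H = I_s ⊗ M_H + Δt (A ⊗ K_H). Let P be an N_h×N_H matrix and R an N_H×N_h matrix, and set 𝐏 = I_s ⊗ P and 𝐑 = I_s ⊗ R. Suppose each characteristic coarse block B_{H,λ_i Δt} = M_H + Δt λ_i K_H is invertible, and suppose the sN_h×sN_h preconditioner W is monolithic with respect to X with invertible blocks W_1, …, W_s. Define the smoother S = I − W⁻¹ B_h and, for a natural number ν, the two-grid iteration matrix T = (I − 𝐏 B_H⁻¹ 𝐑 B_h) S^ν. Then T is monolithic with respect to X with blocks T_i = ( I − P (M_H + Δt λ_i K_H)⁻¹ R (M_h + Δt λ_i K_h) ) · ( I − W_i⁻¹ (M_h + Δt λ_i K_h) )^ν, i.e. T = (X ⊗ I_{N_h}) · blockdiag(T_1, …, T_s) · (X⁻¹ ⊗ I_{N_h}); that is,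 the stage-coupled two-grid iteration decomposes into a two-grid iteration applied to each characteristic stage. -/

import Mathlib

open Matrix Kronecker

/-- Block-diagonal matrix indexed by `Fin s × Fin N` whose `i`-th diagonal block is `Y i`. -/
def blockDiagFst {m n : ℕ} (Y : Fin m → Matrix (Fin n) (Fin n) ℂ) :
    Matrix (Fin m × Fin n) (Fin m × Fin n) ℂ :=
  Matrix.of fun p q => if p.1 = q.1 then Y p.1 p.2 q.2 else 0

/-!
Conjugation by `X ⊗ₖ 1` is compatible with sums, products and inverses of block matrices, including
products with the rectangular transfer operators, for which the conjugating matrices on the two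
sides have different sizes. It sends `1 ⊗ₖ M + t • (A ⊗ₖ K)` to the block-diagonal matrix with
blocks `M + (t * lam i) • K`, because `A * X = X * diagonal lam`, and it leaves `1 ⊗ₖ P` and
`1 ⊗ₖ R` unchanged. The two-grid iteration matrix is built from these matrices by differences,
products and inverses, so it decouples stage by stage.
-/

section Monolithic

variable {ι l m n α : Type*}

/-- The block-diagonal matrix with rectangular blocks `Y i`, with the block index as the first
component of the row and column indices (it is the second one in `Matrix.blockDiagonal`), as in
`diagonal d ⊗ₖ K`. -/
def stageBlockDiagonal [DecidableEq ι] [Zero α] (Y : ι → Matrix m n α) :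
    Matrix (ι × m) (ι × n) α :=
  reindex (Equiv.prodComm m ι) (Equiv.prodComm n ι) (blockDiagonal Y)

theorem blockDiagFst_eq_stageBlockDiagonal {s N : ℕ} (Y : Fin s → Matrix (Fin N) (Fin N) ℂ) :
    blockDiagFst Y = stageBlockDiagonal Y :=
  rfl

section StageBlockDiagonal

variable [DecidableEq ι]

theorem stageBlockDiagonal_one [DecidableEq m] [Zero α] [One α] :
    stageBlockDiagonal (fun _ : ι => (1 : Matrix m m α)) = 1 := by
  rw [stageBlockDiagonal, ← Pi.one_def, blockDiagonal_one, reindex_apply, submatrix_one_equiv]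

theorem stageBlockDiagonal_add [AddZeroClass α] (Y Z : ι → Matrix m n α) :
    stageBlockDiagonal (fun i => Y i + Z i) = stageBlockDiagonal Y + stageBlockDiagonal Z :=
  congrArg (reindex _ _) (blockDiagonal_add Y Z)

theorem stageBlockDiagonal_sub [AddGroup α] (Y Z : ι → Matrix m n α) :
    stageBlockDiagonal (fun i => Y i - Z i) = stageBlockDiagonal Y - stageBlockDiagonal Z :=
  congrArg (reindex _ _) (blockDiagonal_sub Y Z)

theorem stageBlockDiagonal_mul [Fintype ι] [Fintype m] [NonUnitalNonAssocSemiring α]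
    (Y : ι → Matrix l m α) (Z : ι → Matrix m n α) :
    stageBlockDiagonal (fun i => Y i * Z i) = stageBlockDiagonal Y * stageBlockDiagonal Z := by
  simp only [stageBlockDiagonal, blockDiagonal_mul, reindex_apply, submatrix_mul_equiv]

theorem stageBlockDiagonal_smul [MulZeroClass α] (d : ι → α) (K : Matrix m n α) :
    stageBlockDiagonal (fun i => d i • K) = diagonal d ⊗ₖ K :=
  (diagonal_kronecker d K).symm

end StageBlockDiagonal

/-- `T` is monolithic with respect to `X` with (possibly rectangular) blocks `Y`. The defining
equation `(X⁻¹ ⊗ₖ 1) * T * (X ⊗ₖ 1) = stageBlockDiagonal Y` is multiplied by `X ⊗ₖ 1`, so that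
sums, products and powers can be treated without inverting `X`. -/
def IsMonolithic [Fintype ι] [DecidableEq ι] [Fintype m] [DecidableEq m] [Fintype n]
    [DecidableEq n] [Semiring α] (X : Matrix ι ι α) (T : Matrix (ι × m) (ι × n) α)
    (Y : ι → Matrix m n α) : Prop :=
  T * (X ⊗ₖ (1 : Matrix n n α)) = (X ⊗ₖ (1 : Matrix m m α)) * stageBlockDiagonal Y

namespace IsMonolithic

variable [Fintype ι] [DecidableEq ι] [Fintype l] [DecidableEq l] [Fintype m] [DecidableEq m]
  [Fintype n] [DecidableEq n]

section Semiring

variable [Semiring α] {X : Matrix ι ι α}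

theorem one : IsMonolithic X (1 : Matrix (ι × m) (ι × m) α) fun _ => 1 := by
  rw [IsMonolithic, stageBlockDiagonal_one, Matrix.one_mul, Matrix.mul_one]

theorem add {T U : Matrix (ι × m) (ι × n) α} {Y Z : ι → Matrix m n α}
    (hT : IsMonolithic X T Y) (hU : IsMonolithic X U Z) :
    IsMonolithic X (T + U) fun i => Y i + Z i := by
  rw [IsMonolithic, stageBlockDiagonal_add, Matrix.add_mul, Matrix.mul_add, hT, hU]

theorem mul {T : Matrix (ι × l) (ι × m) α} {U : Matrix (ι × m) (ι × n) α}
    {Y : ι → Matrix l m α} {Z : ι → Matrix m n α}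
    (hT : IsMonolithic X T Y) (hU : IsMonolithic X U Z) :
    IsMonolithic X (T * U) fun i => Y i * Z i := by
  rw [IsMonolithic, stageBlockDiagonal_mul, Matrix.mul_assoc, hU, ← Matrix.mul_assoc, hT,
    Matrix.mul_assoc]

theorem pow {T : Matrix (ι × m) (ι × m) α} {Y : ι → Matrix m m α}
    (hT : IsMonolithic X T Y) (ν : ℕ) : IsMonolithic X (T ^ ν) fun i => Y i ^ ν := by
  induction ν with
  | zero => simpa only [pow_zero] using one
  | succ ν ih => simpa only [pow_succ] using ih.mul hT

end Semiring

theorem sub [Ring α] {X : Matrix ι ι α} {T U : Matrix (ι × m) (ι × n) α}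
    {Y Z : ι → Matrix m n α} (hT : IsMonolithic X T Y) (hU : IsMonolithic X U Z) :
    IsMonolithic X (T - U) fun i => Y i - Z i := by
  rw [IsMonolithic, stageBlockDiagonal_sub, Matrix.sub_mul, Matrix.mul_sub, hT, hU]

section CommSemiring

variable [CommSemiring α] {A X : Matrix ι ι α} {lam : ι → α}

theorem kronecker (hA : A * X = X * diagonal lam) (K : Matrix m n α) :
    IsMonolithic X (A ⊗ₖ K) fun i => lam i • K := by
  rw [IsMonolithic, stageBlockDiagonal_smul, ← mul_kronecker_mul, ← mul_kronecker_mul, hA,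
    Matrix.mul_one, Matrix.one_mul]

theorem one_kronecker (K : Matrix m n α) : IsMonolithic X (1 ⊗ₖ K) fun _ => K := by
  have one_mul_X : 1 * X = X * diagonal fun _ => 1 := by
    rw [diagonal_one, Matrix.one_mul, Matrix.mul_one]
  simpa only [one_smul] using kronecker one_mul_X K

theorem one_kronecker_add_smul_kronecker (hA : A * X = X * diagonal lam) (t : α)
    (M K : Matrix m n α) :
    IsMonolithic X (1 ⊗ₖ M + t • (A ⊗ₖ K)) fun i => M + (t * lam i) • K := by
  have htA : (t • A) * X = X * diagonal fun i => t * lam i := by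
    rw [Matrix.smul_mul, hA, ← Matrix.mul_smul, ← diagonal_smul]
    rfl
  rw [← smul_kronecker]
  exact (one_kronecker M).add (kronecker htA K)

end CommSemiring

end IsMonolithic

section CommRing

variable [Fintype ι] [DecidableEq ι] [Fintype m] [DecidableEq m] [Fintype n] [DecidableEq n]
  [CommRing α] {X : Matrix ι ι α}

theorem inv_kronecker_one : (X ⊗ₖ (1 : Matrix m m α))⁻¹ = X⁻¹ ⊗ₖ 1 := by
  rw [inv_kronecker, inv_one]

theorem isUnit_det_kronecker_one (hX : IsUnit X.det) :
    IsUnit (X ⊗ₖ (1 : Matrix m m α)).det := by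
  rw [det_kronecker, det_one, one_pow, mul_one]
  exact hX.pow _

theorem isMonolithic_iff_conj_eq (hX : IsUnit X.det) {T : Matrix (ι × m) (ι × n) α}
    {Y : ι → Matrix m n α} :
    IsMonolithic X T Y ↔
      (X⁻¹ ⊗ₖ (1 : Matrix m m α)) * T * (X ⊗ₖ (1 : Matrix n n α)) = stageBlockDiagonal Y := by
  let := invertibleOfIsUnitDet _ (isUnit_det_kronecker_one (m := m) hX)
  rw [← inv_kronecker_one, Matrix.mul_assoc, inv_mul_eq_iff_eq_mul_of_invertible, IsMonolithic]

theorem isMonolithic_iff_eq_conj (hX : IsUnit X.det) {T : Matrix (ι × m) (ι × n) α}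
    {Y : ι → Matrix m n α} :
    IsMonolithic X T Y ↔
      T = (X ⊗ₖ (1 : Matrix m m α)) * stageBlockDiagonal Y * (X⁻¹ ⊗ₖ (1 : Matrix n n α)) := by
  let := invertibleOfIsUnitDet _ (isUnit_det_kronecker_one (m := n) hX)
  rw [← inv_kronecker_one, eq_comm, mul_inv_eq_iff_eq_mul_of_invertible, IsMonolithic, eq_comm]

theorem IsMonolithic.inv (hX : IsUnit X.det) {T : Matrix (ι × m) (ι × m) α}
    {Y : ι → Matrix m m α} (hT : IsMonolithic X T Y) (hY : ∀ i, IsUnit (Y i).det) :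
    IsMonolithic X T⁻¹ fun i => (Y i)⁻¹ := by
  rw [isMonolithic_iff_eq_conj hX]
  set U := (X ⊗ₖ (1 : Matrix m m α)) * stageBlockDiagonal (fun i => (Y i)⁻¹) *
    (X⁻¹ ⊗ₖ (1 : Matrix m m α)) with hU
  have hTU : IsMonolithic X (T * U) fun _ => 1 := by
    simpa only [mul_nonsing_inv _ (hY _)] using hT.mul ((isMonolithic_iff_eq_conj hX).2 hU)
  have hTU_one : T * U = 1 :=
    ((isMonolithic_iff_eq_conj hX).1 hTU).trans ((isMonolithic_iff_eq_conj hX).1 one).symm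
  exact inv_eq_right_inv hTU_one

/-- The iteration matrix of the two-grid method for the fine matrix `B` with `ν` smoothing steps
preconditioned by `W`, followed by a correction with the coarse matrix `BH`, prolongation `P` and
restriction `R`. -/
noncomputable def twoGridIteration (B W : Matrix m m α) (BH : Matrix n n α) (P : Matrix m n α)
    (R : Matrix n m α) (ν : ℕ) : Matrix m m α :=
  (1 - P * BH⁻¹ * R * B) * (1 - W⁻¹ * B) ^ ν

theorem IsMonolithic.twoGridIteration (hX : IsUnit X.det)
    {B W : Matrix (ι × m) (ι × m) α} {BH : Matrix (ι × n) (ι × n) α}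
    {P : Matrix (ι × m) (ι × n) α} {R : Matrix (ι × n) (ι × m) α}
    {Bb Wb : ι → Matrix m m α} {BHb : ι → Matrix n n α}
    {Pb : ι → Matrix m n α} {Rb : ι → Matrix n m α}
    (hB : IsMonolithic X B Bb) (hW : IsMonolithic X W Wb) (hBH : IsMonolithic X BH BHb)
    (hP : IsMonolithic X P Pb) (hR : IsMonolithic X R Rb)
    (hWb : ∀ i, IsUnit (Wb i).det) (hBHb : ∀ i, IsUnit (BHb i).det) (ν : ℕ) :
    IsMonolithic X (twoGridIteration B W BH P R ν) fun i =>
      twoGridIteration (Bb i) (Wb i) (BHb i) (Pb i) (Rb i) ν := by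
  have correction := one.sub (((hP.mul (hBH.inv hX hBHb)).mul hR).mul hB)
  have smoother := one.sub ((hW.inv hX hWb).mul hB)
  exact correction.mul (smoother.pow ν)

theorem stmt7_general {A : Matrix ι ι α} {lam : ι → α} (hX : IsUnit X.det)
    (hA : A = X * diagonal lam * X⁻¹) (t : α) (Mh Kh : Matrix m m α) (MH KH : Matrix n n α)
    (P : Matrix m n α) (R : Matrix n m α) (hBH : ∀ i, IsUnit (MH + (t * lam i) • KH).det)
    {W : Matrix (ι × m) (ι × m) α} {Wb : ι → Matrix m m α} (hW : IsMonolithic X W Wb)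
    (hWb : ∀ i, IsUnit (Wb i).det) (ν : ℕ) :
    IsMonolithic X
      (twoGridIteration (1 ⊗ₖ Mh + t • (A ⊗ₖ Kh)) W (1 ⊗ₖ MH + t • (A ⊗ₖ KH)) (1 ⊗ₖ P)
        (1 ⊗ₖ R) ν)
      fun i => twoGridIteration (Mh + (t * lam i) • Kh) (Wb i) (MH + (t * lam i) • KH) P R ν := by
  have hAX : A * X = X * diagonal lam := by rw [hA, nonsing_inv_mul_cancel_right _ _ hX]
  exact .twoGridIteration hX (.one_kronecker_add_smul_kronecker hAX t Mh Kh) hW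
    (.one_kronecker_add_smul_kronecker hAX t MH KH) (.one_kronecker P) (.one_kronecker R) hWb hBH ν

end CommRing

end Monolithic

theorem stmt7 (s Nh NH : ℕ) (hs : 0 < s) (hNh : 0 < Nh) (hNH : 0 < NH)
    (A X : Matrix (Fin s) (Fin s) ℂ) (lam : Fin s → ℂ)
    (hX : IsUnit X.det)
    (hA : A = X * Matrix.diagonal lam * X⁻¹)
    (Δt : ℂ)
    (Mh Kh : Matrix (Fin Nh) (Fin Nh) ℂ) (MH KH : Matrix (Fin NH) (Fin NH) ℂ)
    (P : Matrix (Fin Nh) (Fin NH) ℂ) (R : Matrix (Fin NH) (Fin Nh) ℂ)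
    (hBH : ∀ i, IsUnit (MH + (Δt * lam i) • KH).det)
    (W : Matrix (Fin s × Fin Nh) (Fin s × Fin Nh) ℂ)
    (Wb : Fin s → Matrix (Fin Nh) (Fin Nh) ℂ)
    (hW : (X⁻¹ ⊗ₖ (1 : Matrix (Fin Nh) (Fin Nh) ℂ)) * W *
        (X ⊗ₖ (1 : Matrix (Fin Nh) (Fin Nh) ℂ)) = blockDiagFst Wb)
    (hWb : ∀ i, IsUnit (Wb i).det)
    (ν : ℕ) :
    (1 - ((1 : Matrix (Fin s) (Fin s) ℂ) ⊗ₖ P) *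
          ((1 : Matrix (Fin s) (Fin s) ℂ) ⊗ₖ MH + Δt • (A ⊗ₖ KH))⁻¹ *
          ((1 : Matrix (Fin s) (Fin s) ℂ) ⊗ₖ R) *
          ((1 : Matrix (Fin s) (Fin s) ℂ) ⊗ₖ Mh + Δt • (A ⊗ₖ Kh))) *
        (1 - W⁻¹ * ((1 : Matrix (Fin s) (Fin s) ℂ) ⊗ₖ Mh + Δt • (A ⊗ₖ Kh))) ^ ν =
      (X ⊗ₖ (1 : Matrix (Fin Nh) (Fin Nh) ℂ)) *
        blockDiagFst (fun i =>
          (1 - P * (MH + (Δt * lam i) • KH)⁻¹ * R * (Mh + (Δt * lam i) • Kh)) *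
            (1 - (Wb i)⁻¹ * (Mh + (Δt * lam i) • Kh)) ^ ν) *
        (X⁻¹ ⊗ₖ (1 : Matrix (Fin Nh) (Fin Nh) ℂ)) := by
  rw [blockDiagFst_eq_stageBlockDiagonal, ← isMonolithic_iff_conj_eq hX] at hW
  simpa only [blockDiagFst_eq_stageBlockDiagonal, isMonolithic_iff_eq_conj hX, twoGridIteration]
    using stmt7_general hX hA Δt Mh Kh MH KH P R hBH hW hWb ν
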